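/- Both of the following hold as n → ∞: (i) Σ_{s=1}^{⌊0.99n⌋} Σ_{g=2}^{min{s+1, ⌊(n−s)/2⌋}} c_{s,g} → 0; and (ii) for any sequence k = k(n) with k(n) → ∞, Σ_{s=k(n)}^{⌊0.99n⌋} c_{s,1} → 0. -/

import Mathlib

open MeasureTheory Filter

namespace RandomHypercube

/-- Index of a (potential) hypercube edge: the lower endpoint `A` together with the
direction `i` that is added, representing the edge from `A` to `A ∪ {i}`. -/
abbrev EdgeIdx (n : ℕ) := Finset (Fin n) × Fin n

/-- The sample space: an i.i.d. Uniform[0,1] weight for each edge index. -/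
abbrev CubeOmega (n : ℕ) := EdgeIdx n → ℝ

/-- The product of uniform measures on [0,1], one for each edge. -/
noncomputable def cubeMeasure (n : ℕ) : Measure (CubeOmega n) :=
  Measure.pi fun _ => (volume : Measure ℝ).restrict (Set.Icc 0 1)

/-- The vertex visited by the direct path associated to the permutation `σ`
just before taking its `j`-th step: the image under `σ` of `{0, …, j-1}`. -/
def initSeg (n : ℕ) (σ : Equiv.Perm (Fin n)) (j : Fin n) : Finset (Fin n) :=
  (Finset.univ.filter fun i => i < j).image σ

/-- The edge used in the `j`-th step of the direct path associated to `σ`. -/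
def pathEdge (n : ℕ) (σ : Equiv.Perm (Fin n)) (j : Fin n) : EdgeIdx n :=
  (initSeg n σ j, σ j)

/-- The direct path associated to `σ` is accessible if its successive edge
weights are strictly increasing. -/
def Accessible (n : ℕ) (σ : Equiv.Perm (Fin n)) (ω : CubeOmega n) : Prop :=
  StrictMono fun j : Fin n => ω (pathEdge n σ j)

/-- The number of accessible direct paths from `∅` to `[n]`. -/
noncomputable def X (n : ℕ) (ω : CubeOmega n) : ℕ :=
  Nat.card {σ : Equiv.Perm (Fin n) // Accessible n σ ω}


/-- The set of steps `j` at which the direct paths of `σ` and `σ'` use the same edge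
(shared edges necessarily occur at the same level in both paths). -/
def sharedSteps (n : ℕ) (σ σ' : Equiv.Perm (Fin n)) : Finset (Fin n) :=
  Finset.univ.filter fun j => pathEdge n σ j = pathEdge n σ' j

/-- Given the sorted list `l` of steps (levels) of the shared edges, the gap vector:
the number of edges before the first shared edge, strictly between consecutive shared
edges, and after the last shared edge. -/
def gapsOfList (n : ℕ) (l : List ℕ) : List ℕ :=
  List.zipWith (fun a b => b - a) (0 :: l.map (· + 1)) (l ++ [n])

/-- The gap vector of the direct path of `σ'` relative to that of `σ`. -/
def gapVector (n : ℕ) (σ σ' : Equiv.Perm (Fin n)) : List ℕ :=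
  gapsOfList n (((sharedSteps n σ σ').sort (· ≤ ·)).map Fin.val)

/-- The number of (nontrivial) gaps between the direct paths of `σ` and `σ'`:
the number of nonzero entries of the gap vector. -/
def numGaps (n : ℕ) (σ σ' : Equiv.Perm (Fin n)) : ℕ :=
  ((gapVector n σ σ').filter (· != 0)).length

/-- The probability that the direct paths of `σ` and `σ'` are both accessible. -/
noncomputable def pairProb (n : ℕ) (σ σ' : Equiv.Perm (Fin n)) : ℝ :=
  (cubeMeasure n {ω | Accessible n σ ω ∧ Accessible n σ' ω}).toReal

/-- `c n s g`: the sum, over all ordered pairs of direct paths sharing exactly `s`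
edges with `g` gaps, of the probability that both paths are accessible. -/
noncomputable def c (n s g : ℕ) : ℝ :=
  ∑ p ∈ Finset.univ.filter
      (fun p : Equiv.Perm (Fin n) × Equiv.Perm (Fin n) =>
        (sharedSteps n p.1 p.2).card = s ∧ numGaps n p.1 p.2 = g),
    pairProb n p.1 p.2

/-- `w m`: the number of direct paths from `∅` to `[m]` in the `m`-dimensional hypercube
that are edge-disjoint from the canonical path (the identity permutation). -/
noncomputable def w (m : ℕ) : ℕ :=
  Nat.card {σ : Equiv.Perm (Fin m) // sharedSteps m σ 1 = ∅}

end RandomHypercube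

/-!
By symmetry one of the two paths may be taken to be the canonical one, so `c n s g` is `n!` times
a sum over the permutations `τ` whose path shares `s` edges with it, with `g` gaps. Put `M = n - s`.
The two paths use `n + M` distinct edges, whose weights are exchangeable. An ordering of these
weights in which both paths increase is determined by the way it interleaves the two chains of `M`
edges that are not shared, so the two paths are both accessible with probability at most
`(2M).choose M / (n + M)!`.

The permutation `τ` preserves each gap, and every nontrivial gap has length at least two. Since
`(a + 2)! (b + 2)! ≤ 2 (a + b + 2)!`, a single long gap dominates, and there are at most
`(s + 1).choose g * (4 / M) ^ (g - 1) * M!` such `τ`. Altogether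
`c n s g ≤ (s + 1).choose g * (4 / M) ^ (g - 1) * (n / (n + M)) ^ s`. In the range `s ≤ a n` with
`a < 1` this decays geometrically in `s`, and each gap after the first costs a factor of order
`1 / n`.
-/

section LinearExtensions

open Finset

variable {V κ α : Type*}

lemma equiv_eq_of_lt_iff_lt [LinearOrder α] [WellFoundedLT α] {e e' : V ≃ α}
    (h : ∀ x y, e x < e y ↔ e' x < e' y) : e = e' := by
  have hmono : StrictMono (e.symm.trans e') := fun a b hab ↦ by simpa [← h] using hab
  have hrefl : hmono.orderIsoOfSurjective _ (e.symm.trans e').surjective = OrderIso.refl α :=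
    Subsingleton.elim _ _
  ext x
  simpa using (DFunLike.congr_fun hrefl (e x)).symm

lemma exists_equiv_fin_lt_iff_lt [Fintype V] [LinearOrder α] {f : V → α}
    (hf : Function.Injective f) :
    ∃ e : V ≃ Fin (Fintype.card V), ∀ x y, e x < e y ↔ f x < f y := by
  let : LinearOrder V := LinearOrder.lift' f hf
  exact ⟨(Fintype.orderIsoFinOfCardEq V rfl).symm.toEquiv,
    fun _ _ ↦ (Fintype.orderIsoFinOfCardEq V rfl).symm.lt_iff_lt⟩

-- A shuffle is determined by the set of values it takes on the first summand.
lemma card_shuffles_le {κ' : Type*} [Fintype κ] [Fintype κ'] [LinearOrder κ] [LinearOrder κ']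
    [Fintype α] [LinearOrder α] :
    #{e : κ ⊕ κ' ≃ α | StrictMono (e ∘ Sum.inl) ∧ StrictMono (e ∘ Sum.inr)} ≤
      (Fintype.card α).choose (Fintype.card κ) := by
  have hinr (e : κ ⊕ κ' ≃ α) : Set.range (e ∘ Sum.inr) = (Set.range (e ∘ Sum.inl))ᶜ := by
    rw [Set.range_comp, Set.range_comp, ← Set.compl_range_inl, Set.image_compl_eq e.bijective]
  rw [← Finset.card_univ (α := α), ← card_powersetCard]
  refine card_le_card_of_injOn (fun e ↦ univ.map (Function.Embedding.inl.trans e.toEmbedding))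
    (fun e _ ↦ by simp) fun e he e' he' h ↦ ?_
  simp only [coe_filter, mem_univ, true_and, Set.mem_ofPred_eq] at he he'
  have hrange : Set.range (e ∘ Sum.inl) = Set.range (e' ∘ Sum.inl) := by
    simpa [Function.comp_def] using congrArg (fun s : Finset α ↦ (s : Set α)) h
  have hl := (he.1.range_inj he'.1).1 hrange
  have hr := (he.2.range_inj he'.2).1 (by rw [hinr, hinr, hrange])
  ext (i | i)
  exacts [congrFun hl i, congrFun hr i]

-- Two points lie on a common chain, unless both are off the intersection of the two chains.
lemma equiv_eq_of_strictMono_comp [LinearOrder κ] [LinearOrder α] [WellFoundedLT α] {p q : κ → V}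
    (hV : ∀ v, v ∈ Set.range p ∪ Set.range q) {e e' : V ≃ α} (hp : StrictMono (e ∘ p))
    (hq : StrictMono (e ∘ q)) (hp' : StrictMono (e' ∘ p)) (hq' : StrictMono (e' ∘ q))
    (h : ∀ i j, p i ≠ q i → p j ≠ q j →
      (e (p i) < e (q j) ↔ e' (p i) < e' (q j)) ∧ (e (q i) < e (p j) ↔ e' (q i) < e' (p j))) :
    e = e' := by
  have hpp (i j) : e (p i) < e (p j) ↔ e' (p i) < e' (p j) := hp.lt_iff_lt.trans hp'.lt_iff_lt.symm
  have hqq (i j) : e (q i) < e (q j) ↔ e' (q i) < e' (q j) := hq.lt_iff_lt.trans hq'.lt_iff_lt.symm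
  refine equiv_eq_of_lt_iff_lt fun x y ↦ ?_
  rcases hV x with ⟨i, rfl⟩ | ⟨i, rfl⟩ <;> rcases hV y with ⟨j, rfl⟩ | ⟨j, rfl⟩
  · exact hpp i j
  · by_cases hi : p i = q i
    · exact hi ▸ hqq i j
    by_cases hj : p j = q j
    · exact hj ▸ hpp i j
    exact (h i j hi hj).1
  · by_cases hi : p i = q i
    · exact hi ▸ hpp i j
    by_cases hj : p j = q j
    · exact hj ▸ hqq i j
    exact (h i j hi hj).2
  · exact hqq i j

lemma card_linearExtensions_le [Fintype κ] [LinearOrder κ] [Fintype V] [DecidableEq V] [Fintype α]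
    [LinearOrder α] {p q : κ → V} (hp : Function.Injective p)
    (hq : Function.Injective q) (hpq : ∀ i j, p i = q j → i = j)
    (hV : ∀ v, v ∈ Set.range p ∪ Set.range q) :
    #{e : V ≃ α | StrictMono (e ∘ p) ∧ StrictMono (e ∘ q)} ≤
      (2 * #{i | p i ≠ q i}).choose #{i | p i ≠ q i} := by
  let K := {i // p i ≠ q i}
  let f : K ⊕ K → V := Sum.elim (fun i ↦ p i) (fun i ↦ q i)
  have hf : Function.Injective f :=
    (hp.comp Subtype.val_injective).sumElim (hq.comp Subtype.val_injective) fun i j h ↦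
      i.2 (h.trans (congrArg q (hpq i j h).symm))
  choose shuffle hshuffle using fun e : V ≃ α ↦ exists_equiv_fin_lt_iff_lt (e.injective.comp hf)
  have hK : Fintype.card K = #{i | p i ≠ q i} := Fintype.card_subtype _
  have hKK : Fintype.card (K ⊕ K) = 2 * #{i | p i ≠ q i} := by rw [Fintype.card_sum, hK, two_mul]
  rw [← hKK, ← hK]
  refine (card_le_card_of_injOn shuffle (fun e he ↦ ?_) fun e he e' he' h ↦ ?_).trans
    (card_shuffles_le.trans_eq (by rw [Fintype.card_fin]))
  · simp only [coe_filter, mem_univ, true_and, Set.mem_ofPred_eq] at he ⊢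
    exact ⟨fun a b hab ↦ (hshuffle e _ _).2 (he.1 hab), fun a b hab ↦ (hshuffle e _ _).2 (he.2 hab)⟩
  · simp only [coe_filter, mem_univ, true_and, Set.mem_ofPred_eq] at he he'
    have hff (a b) : e (f a) < e (f b) ↔ e' (f a) < e' (f b) :=
      (hshuffle e a b).symm.trans (by rw [h]; exact hshuffle e' a b)
    exact equiv_eq_of_strictMono_comp hV he.1 he.2 he'.1 he'.2 fun i j hi hj ↦
      ⟨hff (.inl ⟨i, hi⟩) (.inr ⟨j, hj⟩), hff (.inr ⟨i, hi⟩) (.inl ⟨j, hj⟩)⟩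

end LinearExtensions

section Symmetrization

open Finset ENNReal

open Classical in
lemma card_mul_measure_le_of_card_le {Ω ι : Type*} [MeasurableSpace Ω] {P : Measure Ω}
    [IsProbabilityMeasure P] [Fintype ι] {T : ι → Ω → Ω} (hT : ∀ i, MeasurePreserving (T i) P P)
    {E : Set Ω} (hE : MeasurableSet E) {K : ℕ}
    (hK : ∀ ω, #{i | T i ω ∈ E} ≤ K) :
    (Fintype.card ι : ℝ≥0∞) * P E ≤ K := by
  have hTE (i) : MeasurableSet (T i ⁻¹' E) := (hT i).measurable hE
  calc (Fintype.card ι : ℝ≥0∞) * P E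
      = ∑ i, P (T i ⁻¹' E) := by
        simp [(hT _).measure_preimage hE.nullMeasurableSet]
    _ = ∫⁻ ω, ∑ i, (T i ⁻¹' E).indicator 1 ω ∂P := by
        rw [lintegral_finsetSum _ fun i _ ↦ measurable_one.indicator (hTE i)]
        simp [hTE]
    _ = ∫⁻ ω, #{i | T i ω ∈ E} ∂P := by
        simp [Set.indicator_apply]
    _ ≤ ∫⁻ _, K ∂P := lintegral_mono fun ω ↦ Nat.cast_le.2 (hK ω)
    _ = K := by simp

lemma exists_equiv_fin_reflect_lt {V α : Type*} [Fintype V] [LinearOrder α] (f : V → α) :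
    ∃ e : V ≃ Fin (Fintype.card V), ∀ x y, f x < f y → e x < e y := by
  let e := Fintype.equivFin V
  refine ⟨e.trans (Tuple.sort (f ∘ e.symm)).symm, fun x y hxy ↦ ?_⟩
  exact (Tuple.monotone_sort (f ∘ e.symm)).reflect_lt (by simpa using hxy)

lemma measurableSet_strictMono_comp {ι κ : Type*} [Countable κ] [Preorder κ] (p : κ → ι) :
    MeasurableSet {ω : ι → ℝ | StrictMono (ω ∘ p)} := by
  simp only [StrictMono, Set.ofPred_forall]
  exact .iInter fun i ↦ .iInter fun j ↦ .iInter fun _ ↦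
    measurableSet_lt (measurable_pi_apply _) (measurable_pi_apply _)

lemma measurePreserving_comp_perm {ι α : Type*} [Fintype ι] [MeasurableSpace α] (μ : Measure α)
    [SigmaFinite μ] (π : Equiv.Perm ι) :
    MeasurePreserving (fun ω : ι → α ↦ ω ∘ π) (Measure.pi fun _ ↦ μ) (Measure.pi fun _ ↦ μ) :=
  measurePreserving_arrowCongr' (fun _ ↦ μ) (fun _ ↦ μ) π.symm (.refl α) fun _ ↦ .id μ

lemma card_image_union_image {ι κ : Type*} [Fintype κ] [DecidableEq ι] {p q : κ → ι}
    (hp : Function.Injective p) (hq : Function.Injective q) (hpq : ∀ i j, p i = q j → i = j) :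
    #(univ.image p ∪ univ.image q) = Fintype.card κ + #{i | p i ≠ q i} := by
  have hdiff : univ.image q \ univ.image p = image q {i | p i ≠ q i} := by
    ext x
    simp only [mem_image, mem_univ, true_and, mem_filter]
    grind
  rw [union_comm, ← card_sdiff_add_card, hdiff, card_image_of_injective _ hp,
    card_image_of_injective _ hq, card_univ, add_comm]

variable {ι κ : Type*} [DecidableEq ι] [Fintype κ] [LinearOrder κ]

open Classical in
lemma card_strictMono_perm_le {V α : Type*} [Fintype V] [DecidableEq V] [LinearOrder α]
    {p q : κ → V}
    (hp : Function.Injective p) (hq : Function.Injective q) (hpq : ∀ i j, p i = q j → i = j)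
    (hV : ∀ v, v ∈ Set.range p ∪ Set.range q) (ω : V → α) :
    #{π : Equiv.Perm V | StrictMono (ω ∘ π ∘ p) ∧ StrictMono (ω ∘ π ∘ q)} ≤
      (2 * #{i | p i ≠ q i}).choose #{i | p i ≠ q i} := by
  obtain ⟨e, he⟩ := exists_equiv_fin_reflect_lt ω
  refine le_trans (card_le_card_of_injOn (fun π ↦ π.trans e) (fun π hπ ↦ ?_) ?_)
    (card_linearExtensions_le hp hq hpq hV (α := Fin (Fintype.card V)))
  · simp only [coe_filter, mem_univ, true_and, Set.mem_ofPred_eq] at hπ ⊢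
    exact ⟨fun i j hij ↦ he _ _ (hπ.1 hij), fun i j hij ↦ he _ _ (hπ.2 hij)⟩
  · exact fun π _ π' _ h ↦ Equiv.ext fun x ↦ e.injective (DFunLike.congr_fun h x)

variable [Fintype ι] (μ : Measure ℝ) [IsProbabilityMeasure μ]

-- Permuting the coordinates in `A` preserves the measure, and for no `ω` are there many
-- permutations making both chains increasing.
lemma factorial_card_mul_measure_strictMono_le {A : Finset ι} {p q : κ → A}
    (hp : Function.Injective p) (hq : Function.Injective q) (hpq : ∀ i j, p i = q j → i = j)
    (hA : ∀ v, v ∈ Set.range p ∪ Set.range q) :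
    ((#A).factorial : ℝ≥0∞) * (Measure.pi fun _ : ι ↦ μ)
      {ω | StrictMono (ω ∘ (↑) ∘ p) ∧ StrictMono (ω ∘ (↑) ∘ q)} ≤
        (2 * #{i | p i ≠ q i}).choose #{i | p i ≠ q i} := by
  have hmeas : MeasurableSet {ω : ι → ℝ | StrictMono (ω ∘ (↑) ∘ p) ∧ StrictMono (ω ∘ (↑) ∘ q)} :=
    (measurableSet_strictMono_comp _).inter (measurableSet_strictMono_comp _)
  have hcomp (r : κ → A) (ω : ι → ℝ) (π : Equiv.Perm A) :
      (ω ∘ Equiv.Perm.ofSubtype π) ∘ (↑) ∘ r = (fun v : A ↦ ω v) ∘ π ∘ r := by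
    ext i
    simp
  rw [← Fintype.card_coe A, ← Fintype.card_perm]
  refine card_mul_measure_le_of_card_le
    (fun π : Equiv.Perm A ↦ measurePreserving_comp_perm μ (Equiv.Perm.ofSubtype π)) hmeas fun ω ↦ ?_
  simpa only [Set.mem_ofPred_eq, hcomp] using
    card_strictMono_perm_le hp hq hpq hA fun v ↦ ω v

lemma factorial_mul_measure_strictMono_comp_le {p q : κ → ι}
    (hp : Function.Injective p) (hq : Function.Injective q) (hpq : ∀ i j, p i = q j → i = j) :
    ((Fintype.card κ + #{i | p i ≠ q i}).factorial : ℝ≥0∞) *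
      (Measure.pi fun _ : ι ↦ μ) {ω | StrictMono (ω ∘ p) ∧ StrictMono (ω ∘ q)} ≤
        (2 * #{i | p i ≠ q i}).choose #{i | p i ≠ q i} := by
  let A := univ.image p ∪ univ.image q
  let p' (i : κ) : A := ⟨p i, by simp [A]⟩
  let q' (i : κ) : A := ⟨q i, by simp [A]⟩
  have hne : #{i | p' i ≠ q' i} = #{i | p i ≠ q i} := by
    congr! with i
    exact Subtype.ext_iff
  rw [← hne]
  have hA : #A = Fintype.card κ + #{i | p' i ≠ q' i} := by
    rw [hne]; exact card_image_union_image hp hq hpq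
  rw [← hA]
  refine factorial_card_mul_measure_strictMono_le μ (p := p') (q := q')
    (fun i j h ↦ hp (congrArg Subtype.val h)) (fun i j h ↦ hq (congrArg Subtype.val h))
    (fun i j h ↦ hpq i j (congrArg Subtype.val h)) ?_
  rintro ⟨v, hv⟩
  have hv' : (∃ i, p i = v) ∨ ∃ i, q i = v := by simpa [A] using hv
  exact hv'.imp (fun ⟨i, hi⟩ ↦ ⟨i, Subtype.ext hi⟩) fun ⟨i, hi⟩ ↦ ⟨i, Subtype.ext hi⟩

end Symmetrization

section Factorial

open Finset

lemma card_piAntidiag {ι : Type*} [DecidableEq ι] (s : Finset ι) (m : ℕ) :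
    #(piAntidiag s m) = (#s + m - 1).choose m := by
  have hs : s = univ.map (Function.Embedding.subtype (· ∈ s)) := s.attach_map_val.symm
  have hsym : #(s.sym m) = #((univ : Finset s).sym m) := by conv_lhs => rw [hs, sym_map, card_map]
  rw [← map_sym_eq_piAntidiag, card_map, hsym, sym_univ, card_univ, Sym.card_sym_eq_choose,
    Fintype.card_coe]

lemma factorial_add_two_mul_factorial_add_two_le (a b : ℕ) :
    (a + 2).factorial * (b + 2).factorial ≤ 2 * (a + b + 2).factorial := by
  induction a with
  | zero => simp
  | succ a ih =>
    rw [show a + 1 + 2 = (a + 2) + 1 by ring,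
      show a + 1 + b + 2 = (a + b + 2) + 1 by ring, Nat.factorial_succ (a + 2),
      Nat.factorial_succ (a + b + 2)]
    nlinarith [Nat.mul_le_mul_left (a + 3) ih, Nat.zero_le (b * (a + b + 2).factorial)]

lemma prod_factorial_add_two_le {ι : Type*} {s : Finset ι} {h : ℕ} (hs : #s = h + 1) (f : ι → ℕ) :
    ∏ i ∈ s, (f i + 2).factorial ≤ 2 ^ h * (∑ i ∈ s, f i + 2).factorial := by
  induction h generalizing s with
  | zero =>
    obtain ⟨i, rfl⟩ := card_eq_one.1 hs
    simp
  | succ h ih =>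
    obtain ⟨i, t, hi, rfl, ht⟩ := card_eq_succ_iff_cons.1 hs
    rw [prod_cons, sum_cons]
    calc (f i + 2).factorial * ∏ j ∈ t, (f j + 2).factorial
        ≤ (f i + 2).factorial * (2 ^ h * (∑ j ∈ t, f j + 2).factorial) :=
          Nat.mul_le_mul_left _ (ih ht)
      _ = 2 ^ h * ((f i + 2).factorial * (∑ j ∈ t, f j + 2).factorial) := by ring
      _ ≤ 2 ^ h * (2 * (f i + ∑ j ∈ t, f j + 2).factorial) :=
          Nat.mul_le_mul_left _ (factorial_add_two_mul_factorial_add_two_le _ _)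
      _ = 2 ^ (h + 1) * (f i + ∑ j ∈ t, f j + 2).factorial := by ring

lemma choose_mul_factorial_le (n k : ℕ) : n.choose k * k.factorial ≤ n.factorial := by
  obtain h | h := lt_or_ge n k
  · simp [Nat.choose_eq_zero_of_lt h]
  rw [← Nat.choose_mul_factorial_mul_factorial h]
  exact Nat.le_mul_of_pos_right _ (Nat.factorial_pos _)

lemma pow_mul_factorial_sub_le {M h : ℕ} (hM : 2 * h ≤ M) :
    M ^ h * (M - h).factorial ≤ 2 ^ h * M.factorial :=
  calc M ^ h * (M - h).factorial
      ≤ (2 * (M + 1 - h)) ^ h * (M - h).factorial := by gcongr; omega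
    _ = 2 ^ h * ((M - h).factorial * (M + 1 - h) ^ h) := by ring
    _ ≤ 2 ^ h * ((M - h).factorial * M.descFactorial h) := by
      gcongr
      exact Nat.pow_sub_le_descFactorial M h
    _ = 2 ^ h * M.factorial := by rw [Nat.factorial_mul_descFactorial (by omega)]

end Factorial

section Series

open Finset

lemma descFactorial_mul_pow_le {m n : ℕ} (hmn : m ≤ n) (s : ℕ) :
    m.descFactorial s * n ^ s ≤ n.descFactorial s * m ^ s := by
  induction s with
  | zero => simp
  | succ s ih =>
    have hstep : (m - s) * n ≤ (n - s) * m := by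
      rw [Nat.sub_mul, Nat.sub_mul, mul_comm m n]
      exact Nat.sub_le_sub_left (Nat.mul_le_mul_left s hmn) _
    calc m.descFactorial (s + 1) * n ^ (s + 1)
        = ((m - s) * n) * (m.descFactorial s * n ^ s) := by rw [Nat.descFactorial_succ]; ring
      _ ≤ ((n - s) * m) * (n.descFactorial s * m ^ s) := Nat.mul_le_mul hstep ih
      _ = n.descFactorial (s + 1) * m ^ (s + 1) := by rw [Nat.descFactorial_succ]; ring

lemma factorial_mul_factorial_mul_choose_div_le {M : ℕ} (hM : 0 < M) (s : ℕ) :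
    ((M + s).factorial * M.factorial * ((2 * M).choose M / (M + s + M).factorial) : ℝ) ≤
      ((M + s : ℕ) / (M + s + M : ℕ)) ^ s := by
  have hM' : (M.factorial : ℝ) ≠ 0 := Nat.cast_ne_zero.2 M.factorial_ne_zero
  have hfac₁ : ((M + s).factorial : ℝ) = M.factorial * (M + s).descFactorial s := by
    exact_mod_cast (Nat.add_sub_cancel M s ▸
      Nat.factorial_mul_descFactorial (Nat.le_add_left s M)).symm
  have hfac₂ : ((M + s + M).factorial : ℝ) =
      (2 * M).choose M * M.factorial * M.factorial * (M + s + M).descFactorial s := by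
    have h := Nat.factorial_mul_descFactorial (n := M + s + M) (k := s) (by omega)
    rw [show M + s + M - s = M + M by omega, ← Nat.add_choose_mul_factorial_mul_factorial] at h
    rw [two_mul]
    exact_mod_cast h.symm
  have hchoose : ((2 * M).choose M : ℝ) ≠ 0 := Nat.cast_ne_zero.2 (Nat.choose_pos (by omega)).ne'
  calc _ = ((M + s).descFactorial s / (M + s + M).descFactorial s : ℝ) := by
        rw [hfac₁, hfac₂]
        field_simp
    _ ≤ ((M + s : ℕ) / (M + s + M : ℕ)) ^ s := by
        have hpos : 0 < (M + s + M).descFactorial s := Nat.descFactorial_pos.2 (by omega)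
        rw [div_pow, div_le_div_iff₀ (by exact_mod_cast hpos) (by positivity), mul_comm (_ ^ s)]
        exact_mod_cast descFactorial_mul_pow_le (Nat.le_add_right (M + s) M) s

lemma choose_add_two_le (k h : ℕ) : k.choose (h + 2) ≤ k ^ 2 * k.choose h := by
  have hstep (j : ℕ) : k.choose (j + 1) ≤ k * k.choose j :=
    calc k.choose (j + 1) ≤ k.choose (j + 1) * (j + 1) := Nat.le_mul_of_pos_right _ j.succ_pos
      _ = k.choose j * (k - j) := Nat.choose_succ_right_eq k j
      _ ≤ k * k.choose j := by
        rw [mul_comm]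
        exact Nat.mul_le_mul_right _ (Nat.sub_le k j)
  calc k.choose (h + 2) ≤ k * (k * k.choose h) := (hstep _).trans (Nat.mul_le_mul_left _ (hstep h))
    _ = k ^ 2 * k.choose h := by ring

lemma sum_choose_mul_pow_le {δ : ℝ} (hδ : 0 ≤ δ) {m k : ℕ} (hm : m ≤ k) :
    ∑ g ∈ Icc 2 m, k.choose g * δ ^ (g - 1) ≤ δ * k ^ 2 * (1 + δ) ^ k := by
  calc ∑ g ∈ Icc 2 m, k.choose g * δ ^ (g - 1)
      ≤ ∑ g ∈ Ico (0 + 2) (k + 1 + 2), k.choose g * δ ^ (g - 1) := by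
        refine sum_le_sum_of_subset_of_nonneg (fun g hg ↦ ?_) fun _ _ _ ↦ by positivity
        rw [mem_Icc] at hg
        rw [mem_Ico]
        omega
    _ = ∑ h ∈ range (k + 1), k.choose (h + 2) * δ ^ (h + 1) := by
        rw [← sum_Ico_add', range_eq_Ico]
        rfl
    _ ≤ ∑ h ∈ range (k + 1), (k ^ 2 * k.choose h) * δ ^ (h + 1) := by
        gcongr with h
        exact_mod_cast choose_add_two_le k h
    _ = δ * k ^ 2 * (1 + δ) ^ k := by
        rw [add_comm 1 δ, add_pow, mul_sum]
        refine sum_congr rfl fun h _ ↦ ?_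
        ring

lemma summable_succ_pow_mul_geometric (d : ℕ) {r : ℝ} (hr₀ : 0 < r) (hr₁ : r < 1) :
    Summable fun s : ℕ ↦ ((s : ℝ) + 1) ^ d * r ^ s := by
  have hr : ‖r‖ < 1 := by rwa [Real.norm_of_nonneg hr₀.le]
  have h := summable_pow_mul_geometric_of_norm_lt_one d hr
  refine (((summable_nat_add_iff 1).2 h).mul_left r⁻¹).congr fun s ↦ ?_
  rw [pow_succ r]
  push_cast
  field_simp

lemma tendsto_sum_Icc_zero_of_summable {α : Type*} {l : Filter α} {u : ℕ → ℝ} (hu : Summable u)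
    (hu₀ : ∀ s, 0 ≤ u s) {k : α → ℕ} (hk : Tendsto k l atTop) (m : α → ℕ) :
    Tendsto (fun x ↦ ∑ s ∈ Icc (k x) (m x), u s) l (nhds 0) := by
  refine squeeze_zero (fun x ↦ sum_nonneg fun s _ ↦ hu₀ s) (fun x ↦ ?_)
    ((tendsto_sum_nat_add u).comp hk)
  calc ∑ s ∈ Icc (k x) (m x), u s ≤ ∑ s ∈ Ico (0 + k x) (m x + 1 + k x), u s := by
        refine sum_le_sum_of_subset_of_nonneg (fun s hs ↦ ?_) fun s _ _ ↦ hu₀ s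
        rw [mem_Icc] at hs
        rw [mem_Ico]
        omega
    _ = ∑ s ∈ Ico 0 (m x + 1), u (s + k x) := (sum_Ico_add' u _ _ _).symm
    _ ≤ ∑' s, u (s + k x) :=
        ((summable_nat_add_iff (k x)).2 hu).sum_le_tsum _ fun _ _ ↦ hu₀ _

end Series

namespace RandomHypercube

open Finset ENNReal

variable {n : ℕ}

section Paths

lemma mem_initSeg {σ : Equiv.Perm (Fin n)} {j v : Fin n} : v ∈ initSeg n σ j ↔ σ.symm v < j := by
  simp [initSeg, ← Equiv.eq_symm_apply]

lemma card_initSeg (σ : Equiv.Perm (Fin n)) (j : Fin n) : #(initSeg n σ j) = j := by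
  rw [initSeg, card_image_of_injective _ σ.injective, filter_gt_eq_Iio, Fin.card_Iio]

lemma eq_of_pathEdge_eq {σ σ' : Equiv.Perm (Fin n)} {i j : Fin n}
    (h : pathEdge n σ i = pathEdge n σ' j) : i = j := by
  rw [Fin.ext_iff, ← card_initSeg σ i, ← card_initSeg σ' j]
  exact congrArg (#·.1) h

lemma mem_sharedSteps {σ σ' : Equiv.Perm (Fin n)} {j : Fin n} :
    j ∈ sharedSteps n σ σ' ↔ pathEdge n σ j = pathEdge n σ' j := by
  simp [sharedSteps]

lemma mem_sharedSteps_one {τ : Equiv.Perm (Fin n)} {j : Fin n} :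
    j ∈ sharedSteps n 1 τ ↔ (∀ i, τ i < j ↔ i < j) ∧ τ j = j := by
  simp only [mem_sharedSteps, pathEdge, Prod.mk.injEq, Finset.ext_iff, mem_initSeg]
  rw [← τ.forall_congr_right]
  simp [Equiv.Perm.one_def, eq_comm]

lemma pathEdge_mul (ρ σ : Equiv.Perm (Fin n)) (j : Fin n) :
    pathEdge n (ρ * σ) j = Prod.map (image ρ) ρ (pathEdge n σ j) := by
  simp [pathEdge, initSeg, image_image]

lemma sharedSteps_mul (ρ σ σ' : Equiv.Perm (Fin n)) :
    sharedSteps n (ρ * σ) (ρ * σ') = sharedSteps n σ σ' := by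
  ext j
  simp only [mem_sharedSteps, pathEdge_mul,
    ((image_injective ρ.injective).prodMap ρ.injective).eq_iff]

lemma numGaps_mul (ρ σ σ' : Equiv.Perm (Fin n)) :
    numGaps n (ρ * σ) (ρ * σ') = numGaps n σ σ' := by
  simp only [numGaps, gapVector, sharedSteps_mul]

lemma card_pairs_eq (s g : ℕ) :
    #{p : Equiv.Perm (Fin n) × Equiv.Perm (Fin n) |
        #(sharedSteps n p.1 p.2) = s ∧ numGaps n p.1 p.2 = g} =
      n.factorial * #{τ | #(sharedSteps n 1 τ) = s ∧ numGaps n 1 τ = g} := by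
  have hn : n.factorial = #(univ : Finset (Equiv.Perm (Fin n))) := by
    rw [card_univ, Fintype.card_perm, Fintype.card_fin]
  rw [hn, ← card_product]
  refine card_nbij' (fun p ↦ (p.1, p.1⁻¹ * p.2)) (fun p ↦ (p.1, p.1 * p.2)) ?_ ?_ ?_ ?_
  · intro p
    simp [← sharedSteps_mul p.1 1, ← numGaps_mul p.1 1]
  · intro p
    simp [← sharedSteps_mul p.1 1, ← numGaps_mul p.1 1]
  · simp [Set.LeftInvOn]
  · simp [Set.LeftInvOn]

instance : IsProbabilityMeasure ((volume : Measure ℝ).restrict (Set.Icc 0 1)) := ⟨by simp⟩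

lemma pairProb_le (σ σ' : Equiv.Perm (Fin n)) {M : ℕ} (hM : #(sharedSteps n σ σ') + M = n) :
    pairProb n σ σ' ≤ (2 * M).choose M / (n + M).factorial := by
  have hinj (ρ : Equiv.Perm (Fin n)) : Function.Injective (pathEdge n ρ) :=
    fun _ _ ↦ eq_of_pathEdge_eq
  have hcard : #{j | pathEdge n σ j ≠ pathEdge n σ' j} = M := by
    have h := card_filter_add_card_filter_not (s := univ) fun j ↦ pathEdge n σ j = pathEdge n σ' j
    rw [card_univ, Fintype.card_fin] at h
    exact Nat.add_left_cancel (h.trans hM.symm)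
  have h := factorial_mul_measure_strictMono_comp_le ((volume : Measure ℝ).restrict (Set.Icc 0 1))
    (hinj σ) (hinj σ') fun _ _ ↦ eq_of_pathEdge_eq
  rw [hcard, Fintype.card_fin] at h
  rw [le_div_iff₀' (by positivity)]
  simpa [pairProb, cubeMeasure, Accessible, Function.comp_def]
    using toReal_mono (natCast_ne_top _) h

lemma c_le_of_forall {s g : ℕ} {P : ℝ}
    (hP : ∀ σ σ', #(sharedSteps n σ σ') = s → pairProb n σ σ' ≤ P) :
    c n s g ≤ n.factorial * #{τ | #(sharedSteps n 1 τ) = s ∧ numGaps n 1 τ = g} * P := by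
  rw [← Nat.cast_mul, ← card_pairs_eq, ← nsmul_eq_mul]
  exact sum_le_card_nsmul _ _ _ fun p hp ↦ hP _ _ (mem_filter.1 hp).2.1

end Paths

section Gaps

variable {S : Finset (Fin n)} {i j x : Fin n} {k : ℕ}

/-- The number of steps of `S` before step `j`. -/
def rank (S : Finset (Fin n)) (j : Fin n) : ℕ := #{x ∈ S | x < j}

/-- The length of the `k`-th gap of a set `S` of shared steps: the number of steps outside `S` that
come after exactly `k` steps of `S`. -/
def gapSize (S : Finset (Fin n)) (k : ℕ) : ℕ := #{j ∈ Sᶜ | rank S j = k}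

/-- The indices of the nontrivial gaps of a set `S` of shared steps. -/
def gapSupport (S : Finset (Fin n)) : Finset ℕ := {k ∈ range (#S + 1) | gapSize S k ≠ 0}

lemma rank_mono : Monotone (rank S) := fun _ _ hij ↦
  card_le_card <| monotone_filter_right _ fun _ _ hx ↦ hx.trans_le hij

lemma rank_le_card : rank S j ≤ #S := card_filter_le _ _

lemma rank_lt_rank_of_mem (hi : i ∈ S) (hij : i < j) : rank S i < rank S j := by
  refine card_lt_card ⟨monotone_filter_right _ fun _ _ hx ↦ hx.trans hij, fun h ↦ ?_⟩
  exact lt_irrefl i (mem_filter.1 (h (mem_filter.2 ⟨hi, hij⟩))).2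

lemma rank_lt_card_of_mem (hj : j ∈ S) : rank S j < #S :=
  card_lt_card (filter_ssubset.2 ⟨j, hj, lt_irrefl j⟩)

lemma rank_le_rank_iff_lt (hj : j ∉ S) (hx : x ∈ S) : rank S j ≤ rank S x ↔ j < x := by
  refine ⟨fun h ↦ lt_of_not_ge fun hxj ↦ ?_, fun h ↦ rank_mono h.le⟩
  exact (rank_lt_rank_of_mem hx (hxj.lt_of_ne (ne_of_mem_of_not_mem hx hj))).not_ge h

lemma sum_gapSize_add_card (S : Finset (Fin n)) : ∑ k ∈ range (#S + 1), gapSize S k + #S = n := by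
  have h := card_compl_add_card S
  rwa [Fintype.card_fin, card_eq_sum_card_fiberwise (f := rank S) (t := range (#S + 1))
    fun j _ ↦ mem_range_succ_iff.2 rank_le_card] at h

lemma val_eq_rank_add_sum_gapSize (hx : x ∈ S) :
    (x : ℕ) = rank S x + ∑ k ∈ range (rank S x + 1), gapSize S k := by
  have h : {j ∈ Sᶜ | j < x} = {j ∈ Sᶜ | rank S j ∈ range (rank S x + 1)} := by
    refine filter_congr fun j hj ↦ ?_
    rw [mem_range_succ_iff, rank_le_rank_iff_lt (mem_compl.1 hj) hx]
  calc (x : ℕ) = #(filter (· < x) univ) := by rw [filter_gt_eq_Iio, Fin.card_Iio]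
    _ = rank S x + #{j ∈ Sᶜ | j < x} := by
      rw [rank, ← card_union_of_disjoint (disjoint_filter_filter disjoint_compl_right),
        ← filter_union, union_compl]
    _ = rank S x + ∑ k ∈ range (rank S x + 1), gapSize S k := by
      simp only [h, gapSize, sum_card_fiberwise_eq_card_filter]

lemma map_val_eq_image_sum_gapSize (S : Finset (Fin n)) :
    S.map Fin.valEmbedding = (range #S).image fun k ↦ k + ∑ i ∈ range (k + 1), gapSize S i := by
  refine eq_of_subset_of_card_le (fun v hv ↦ ?_) (card_image_le.trans (by simp))
  obtain ⟨x, hx, rfl⟩ := mem_map.1 hv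
  exact mem_image.2 ⟨rank S x, mem_range.2 (rank_lt_card_of_mem hx),
    (val_eq_rank_add_sum_gapSize hx).symm⟩

lemma eq_of_gapSize_eq {S' : Finset (Fin n)} (hcard : #S = #S')
    (h : ∀ k ∈ range #S, gapSize S k = gapSize S' k) : S = S' := by
  apply map_injective Fin.valEmbedding
  rw [map_val_eq_image_sum_gapSize, map_val_eq_image_sum_gapSize, ← hcard]
  refine image_congr fun k hk ↦ congrArg (k + ·) (sum_congr rfl fun i hi ↦ h i ?_)
  exact mem_range.2 ((mem_range_succ_iff.1 hi).trans_lt (mem_range.1 hk))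

end Gaps

section SharedSteps

variable {τ : Equiv.Perm (Fin n)} {j : Fin n} {k : ℕ}

lemma apply_mem_sharedSteps_iff : τ j ∈ sharedSteps n 1 τ ↔ j ∈ sharedSteps n 1 τ := by
  refine ⟨fun h ↦ ?_, fun h ↦ ?_⟩
  · rwa [τ.injective (mem_sharedSteps_one.1 h).2] at h
  · rwa [(mem_sharedSteps_one.1 h).2]

lemma rank_sharedSteps_apply (τ : Equiv.Perm (Fin n)) (j : Fin n) :
    rank (sharedSteps n 1 τ) (τ j) = rank (sharedSteps n 1 τ) j := by
  refine congrArg card (filter_congr fun x hx ↦ ?_)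
  obtain ⟨hlt, hfix⟩ := mem_sharedSteps_one.1 hx
  have heq : τ j = x ↔ j = x := by rw [← τ.apply_eq_iff_eq (x := j), hfix]
  rw [← not_iff_not, not_lt, not_lt, le_iff_lt_or_eq, le_iff_lt_or_eq, hlt, heq]

-- A step alone in its gap would be fixed by `τ`, and each of the two sides of it preserved.
lemma gapSize_sharedSteps_ne_one (τ : Equiv.Perm (Fin n)) (k : ℕ) :
    gapSize (sharedSteps n 1 τ) k ≠ 1 := by
  set S := sharedSteps n 1 τ
  intro h
  obtain ⟨j, hj⟩ := card_eq_one.1 h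
  have hgap (i) (hi : i ∉ S) : rank S i = k ↔ i = j := by
    have := Finset.ext_iff.1 hj i
    simpa [hi] using this
  obtain ⟨hjS, hjk⟩ : j ∉ S ∧ rank S j = k := by
    have : j ∈ {j ∈ Sᶜ | rank S j = k} := hj ▸ mem_singleton_self j
    simpa using this
  have hfix : τ j = j :=
    (hgap _ (mt apply_mem_sharedSteps_iff.1 hjS)).1 ((rank_sharedSteps_apply τ j).trans hjk)
  have hlt_iff (i) (hi : i ∉ S) : i < j ↔ rank S i < k := by
    rcases eq_or_ne i j with rfl | hij
    · simp [hjk]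
    · exact ⟨fun h ↦ ((rank_mono h.le).trans_eq hjk).lt_of_ne (mt (hgap i hi).1 hij),
        fun h ↦ rank_mono.reflect_lt (h.trans_eq hjk.symm)⟩
  refine hjS (mem_sharedSteps_one.2 ⟨fun i ↦ ?_, hfix⟩)
  by_cases hi : i ∈ S
  · rw [(mem_sharedSteps_one.1 hi).2]
  · rw [hlt_iff _ hi, hlt_iff _ (mt apply_mem_sharedSteps_iff.1 hi), rank_sharedSteps_apply]

lemma card_sharedSteps_eq_le (S : Finset (Fin n)) :
    #{τ | sharedSteps n 1 τ = S} ≤ ∏ k ∈ range (#S + 1), (gapSize S k).factorial := by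
  let color (j : Fin n) : Fin n ⊕ Fin (#S + 1) :=
    if j ∈ S then .inl j else .inr ⟨rank S j, Nat.lt_succ_of_le rank_le_card⟩
  have hinl (x) : Fintype.card {j // color j = .inl x} ≤ 1 := by
    refine Fintype.card_le_one_iff.2 fun ⟨i, hi⟩ ⟨j, hj⟩ ↦ Subtype.ext ?_
    simp only [color] at hi hj
    grind
  have hinr (k) : Fintype.card {j // color j = .inr k} = gapSize S k := by
    rw [Fintype.card_subtype]
    refine congrArg card (Finset.ext fun j ↦ ?_)
    by_cases hj : j ∈ S <;> simp [color, hj, Fin.ext_iff]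
  calc #{τ | sharedSteps n 1 τ = S}
      ≤ #{τ : Equiv.Perm (Fin n) | color ∘ τ = color} := by
        refine card_le_card fun τ hτ ↦ mem_filter.2 ⟨mem_univ _, funext fun j ↦ ?_⟩
        obtain rfl := (mem_filter.1 hτ).2
        by_cases hj : j ∈ sharedSteps n 1 τ
        · simp [(mem_sharedSteps_one.1 hj).2]
        · simp [color, apply_mem_sharedSteps_iff, hj, rank_sharedSteps_apply]
    _ = ∏ y, (Fintype.card {j // color j = y}).factorial := by
        rw [← Fintype.card_subtype, DomMulAct.stabilizer_card]
    _ = ∏ k ∈ range (#S + 1), (gapSize S k).factorial := by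
        rw [Fintype.prod_sum_type, prod_eq_one fun x _ ↦ Nat.factorial_eq_one.2 (hinl x), one_mul,
          prod_range]
        simp only [hinr]

end SharedSteps

section GapVector

lemma zipWith_sub_eq_map_card {n : ℕ} {l : List ℕ} (hl : l.Pairwise (· < ·)) {a : ℕ}
    (ha : ∀ x ∈ l, a ≤ x ∧ x < n) :
    List.zipWith (fun a b ↦ b - a) (a :: l.map (· + 1)) (l ++ [n]) =
      (List.range (l.length + 1)).map fun k ↦ #{j ∈ Ico a n | j ∉ l ∧ l.countP (· < j) = k} := by
  induction l generalizing a with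
  | nil => simp
  | cons x l ih =>
    obtain ⟨hx, hl⟩ := List.pairwise_cons.1 hl
    obtain ⟨hax, hxn⟩ := ha x List.mem_cons_self
    rw [List.map_cons, List.cons_append, List.zipWith_cons_cons, List.length_cons,
      List.range_succ_eq_map, List.map_cons, List.map_map,
      ih hl fun y hy ↦ ⟨hx y hy, (ha y (List.mem_cons_of_mem x hy)).2⟩]
    have hle (j : ℕ) (hj : ¬x < j) (y : ℕ) (hy : y ∈ l) : j ≤ y := (not_lt.1 hj).trans (hx y hy).le
    congr 1
    · rw [← Nat.card_Ico]
      congr 1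
      ext j
      simp only [mem_Ico, mem_filter, List.countP_cons, List.countP_eq_zero, Nat.add_eq_zero_iff]
      grind
    · refine List.map_congr_left fun k _ ↦ congrArg card (Finset.ext fun j ↦ ?_)
      by_cases hj : x < j
      · simp [hj, hj.ne', hax.trans hj.le]
      · have hcount : l.countP (· < j) = 0 := by simpa [List.countP_eq_zero] using hle j hj
        simp [hj, hcount]

lemma countP_sort_map_val (S : Finset (Fin n)) (j : Fin n) :
    ((S.sort (· ≤ ·)).map Fin.val).countP (· < (j : ℕ)) = rank S j := by
  rw [rank, card_def, filter_val, ← sort_eq S (· ≤ ·), Multiset.filter_coe, Multiset.coe_card,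
    List.countP_map, List.countP_eq_length_filter]
  rfl

lemma gapVector_eq_map_gapSize (σ σ' : Equiv.Perm (Fin n)) :
    gapVector n σ σ' =
      (List.range (#(sharedSteps n σ σ') + 1)).map (gapSize (sharedSteps n σ σ')) := by
  set S := sharedSteps n σ σ'
  have hlen : ((S.sort (· ≤ ·)).map Fin.val).length = #S := by simp
  rw [gapVector, gapsOfList, zipWith_sub_eq_map_card (a := 0), hlen]
  · refine List.map_congr_left fun k _ ↦ ?_
    rw [gapSize, ← card_map Fin.valEmbedding]
    congr 1
    ext j
    simp only [mem_filter, mem_Ico, Finset.mem_map, mem_compl, ← countP_sort_map_val,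
      Fin.valEmbedding_apply]
    constructor
    · rintro ⟨⟨-, hj⟩, hjS, hk⟩
      exact ⟨⟨j, hj⟩, ⟨fun h ↦ hjS (List.mem_map.2 ⟨⟨j, hj⟩, by simpa, rfl⟩), hk⟩, rfl⟩
    · rintro ⟨a, ⟨ha, hk⟩, rfl⟩
      exact ⟨⟨Nat.zero_le _, a.2⟩, by simpa [Fin.val_inj] using ha, hk⟩
  · exact List.pairwise_map.2 (S.sortedLT_sort).pairwise
  · simp

lemma numGaps_eq_card_gapSupport (σ σ' : Equiv.Perm (Fin n)) :
    numGaps n σ σ' = #(gapSupport (sharedSteps n σ σ')) := by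
  rw [numGaps, gapSupport, gapVector_eq_map_gapSize, ← List.countP_eq_length_filter,
    List.countP_map, List.countP_eq_length_filter]
  exact congrArg List.length (List.filter_congr fun k _ ↦ Bool.eq_iff_iff.2 (by simp))

end GapVector

section GapSets

variable {s g h N : ℕ} {S : Finset (Fin n)}

lemma mem_gapSupport {k : ℕ} : k ∈ gapSupport S ↔ gapSize S k ≠ 0 := by
  refine ⟨fun hk ↦ (mem_filter.1 hk).2, fun hk ↦ mem_filter.2 ⟨?_, hk⟩⟩
  obtain ⟨j, hj⟩ := card_ne_zero.1 hk
  exact (mem_filter.1 hj).2 ▸ mem_range_succ_iff.2 rank_le_card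

/-- The sets of `s` levels with `g` nontrivial gaps, each of length at least two: these are the
candidates for the shared steps of two direct paths that share `s` edges with `g` gaps. -/
def gapSets (n s g : ℕ) : Finset (Finset (Fin n)) :=
  {S | #S = s ∧ #(gapSupport S) = g ∧ ∀ k ∈ gapSupport S, 2 ≤ gapSize S k}

lemma mem_gapSets :
    S ∈ gapSets n s g ↔ #S = s ∧ #(gapSupport S) = g ∧ ∀ k ∈ gapSupport S, 2 ≤ gapSize S k := by
  simp [gapSets]

lemma sharedSteps_mem_gapSets {τ : Equiv.Perm (Fin n)} (hs : #(sharedSteps n 1 τ) = s)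
    (hg : numGaps n 1 τ = g) : sharedSteps n 1 τ ∈ gapSets n s g := by
  refine mem_gapSets.2 ⟨hs, (numGaps_eq_card_gapSupport 1 τ).symm.trans hg, fun k hk ↦ ?_⟩
  have h0 := mem_gapSupport.1 hk
  have h1 := gapSize_sharedSteps_ne_one τ k
  omega

lemma sum_gapSize_sub_two (hS : S ∈ gapSets n s g) :
    ∑ k ∈ gapSupport S, (gapSize S k - 2) + 2 * g + s = n := by
  obtain ⟨rfl, rfl, htwo⟩ := mem_gapSets.1 hS
  rw [mul_comm, ← smul_eq_mul, ← sum_const, ← sum_add_distrib,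
    sum_congr rfl fun k hk ↦ Nat.sub_add_cancel (htwo k hk), gapSupport, sum_filter_ne_zero,
    sum_gapSize_add_card]

lemma card_gapSets_le (hN : s + 2 * (h + 1) + N = n) :
    #(gapSets n s (h + 1)) ≤ (s + 1).choose (h + 1) * (h + N).choose N := by
  let gaps (S : Finset (Fin n)) : Σ _ : Finset ℕ, ℕ → ℕ := ⟨gapSupport S, fun k ↦ gapSize S k - 2⟩
  let target := (powersetCard (h + 1) (range (s + 1))).sigma fun T ↦ piAntidiag T N
  have hmaps (S) (hS : S ∈ gapSets n s (h + 1)) : gaps S ∈ target := by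
    have hsum := sum_gapSize_sub_two hS
    obtain ⟨rfl, hcard, -⟩ := mem_gapSets.1 hS
    refine mem_sigma.2 ⟨mem_powersetCard.2 ⟨filter_subset _ _, hcard⟩, mem_piAntidiag.2 ⟨?_, ?_⟩⟩
    · change ∑ k ∈ gapSupport S, (gapSize S k - 2) = N
      omega
    · exact fun k hk ↦ mem_gapSupport.2 fun h ↦ hk (by simp [gaps, h])
  have hinj : Set.InjOn gaps (gapSets n s (h + 1)) := by
    intro S hS S' hS' heq
    obtain ⟨hcard, -, htwo⟩ := mem_gapSets.1 hS
    obtain ⟨hcard', -, htwo'⟩ := mem_gapSets.1 hS'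
    obtain ⟨hsupp, hsize⟩ := Sigma.mk.inj heq
    refine eq_of_gapSize_eq (hcard.trans hcard'.symm) fun k _ ↦ ?_
    have hk := congrFun (eq_of_heq hsize) k
    have hk' := Finset.ext_iff.1 hsupp k
    grind [mem_gapSupport]
  calc #(gapSets n s (h + 1)) ≤ #target := card_le_card_of_injOn gaps hmaps hinj
    _ = ∑ T ∈ powersetCard (h + 1) (range (s + 1)), #(piAntidiag T N) := card_sigma _ _
    _ = #(powersetCard (h + 1) (range (s + 1))) * (h + N).choose N := by
        refine sum_const_nat fun T hT ↦ ?_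
        rw [card_piAntidiag, (mem_powersetCard.1 hT).2, Nat.add_right_comm, Nat.add_sub_cancel]
    _ = (s + 1).choose (h + 1) * (h + N).choose N := by rw [card_powersetCard, card_range]

lemma prod_factorial_gapSize_le (hN : s + 2 * (h + 1) + N = n) (hS : S ∈ gapSets n s (h + 1)) :
    ∏ k ∈ range (#S + 1), (gapSize S k).factorial ≤ 2 ^ h * (N + 2).factorial := by
  have hsum := sum_gapSize_sub_two hS
  obtain ⟨-, hcard, htwo⟩ := mem_gapSets.1 hS
  calc ∏ k ∈ range (#S + 1), (gapSize S k).factorial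
      = ∏ k ∈ gapSupport S, (gapSize S k).factorial := by
        refine (prod_filter_of_ne fun k _ hk ↦ ?_).symm
        exact fun h ↦ hk (by rw [h, Nat.factorial_zero])
    _ = ∏ k ∈ gapSupport S, (gapSize S k - 2 + 2).factorial :=
        prod_congr rfl fun k hk ↦ by rw [Nat.sub_add_cancel (htwo k hk)]
    _ ≤ 2 ^ h * (∑ k ∈ gapSupport S, (gapSize S k - 2) + 2).factorial :=
        prod_factorial_add_two_le hcard _
    _ = 2 ^ h * (N + 2).factorial := by rw [show ∑ k ∈ gapSupport S, (gapSize S k - 2) = N by omega]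

lemma card_perm_numGaps_eq_le (hN : s + 2 * (h + 1) + N = n) :
    #{τ | #(sharedSteps n 1 τ) = s ∧ numGaps n 1 τ = h + 1} ≤
      (s + 1).choose (h + 1) * (2 ^ h * (h + N + 2).factorial) := by
  calc #{τ | #(sharedSteps n 1 τ) = s ∧ numGaps n 1 τ = h + 1}
      ≤ ∑ S ∈ gapSets n s (h + 1), #{τ | sharedSteps n 1 τ = S} := by
        rw [card_eq_sum_card_fiberwise (f := sharedSteps n 1) (t := gapSets n s (h + 1))
          fun τ hτ ↦ (mem_filter.1 hτ).2.elim sharedSteps_mem_gapSets]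
        exact sum_le_sum fun S _ ↦ card_le_card (filter_subset_filter _ (subset_univ _))
    _ ≤ ∑ S ∈ gapSets n s (h + 1), 2 ^ h * (N + 2).factorial :=
        sum_le_sum fun S hS ↦ (card_sharedSteps_eq_le S).trans (prod_factorial_gapSize_le hN hS)
    _ ≤ (s + 1).choose (h + 1) * (h + N).choose N * (2 ^ h * (N + 2).factorial) := by
        rw [sum_const, smul_eq_mul]
        gcongr
        exact card_gapSets_le hN
    _ = (s + 1).choose (h + 1) * (2 ^ h * ((h + N).choose N * (N + 2).factorial)) := by ring
    _ ≤ (s + 1).choose (h + 1) * (2 ^ h * ((h + N + 2).choose (N + 2) * (N + 2).factorial)) := by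
        gcongr
        calc (h + N).choose N = (h + N).choose h := Nat.choose_symm_add.symm
          _ ≤ (h + (N + 2)).choose h := Nat.choose_le_choose h (by omega)
          _ = (h + N + 2).choose (N + 2) := Nat.choose_symm_add
    _ ≤ (s + 1).choose (h + 1) * (2 ^ h * (h + N + 2).factorial) := by
        gcongr
        exact choose_mul_factorial_le _ _

lemma card_perm_numGaps_eq_le_of_lt (hs : s < n) :
    (#{τ | #(sharedSteps n 1 τ) = s ∧ numGaps n 1 τ = h + 1} : ℝ) ≤
      (s + 1).choose (h + 1) * ((4 / (n - s)) ^ h * (n - s).factorial) := by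
  have hpos : 0 < (n - s : ℝ) := sub_pos.2 (Nat.cast_lt.2 hs)
  obtain hlt | hle := lt_or_ge n (s + 2 * (h + 1))
  · have hempty : ({τ | #(sharedSteps n 1 τ) = s ∧ numGaps n 1 τ = h + 1} : Finset _) = ∅ := by
      refine filter_eq_empty_iff.2 fun τ _ hτ ↦ ?_
      have := sum_gapSize_sub_two (hτ.elim sharedSteps_mem_gapSets)
      omega
    rw [hempty, card_empty, Nat.cast_zero]
    positivity
  · obtain ⟨N, hN⟩ := Nat.exists_eq_add_of_le hle
    have hpow : (n - s : ℝ) ^ h * (n - s - h).factorial ≤ 2 ^ h * (n - s).factorial := by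
      rw [← Nat.cast_sub hs.le]
      exact_mod_cast pow_mul_factorial_sub_le (M := n - s) (h := h) (by omega)
    calc (#{τ | #(sharedSteps n 1 τ) = s ∧ numGaps n 1 τ = h + 1} : ℝ)
        ≤ (s + 1).choose (h + 1) * (2 ^ h * (n - s - h).factorial) := by
          rw [show n - s - h = h + N + 2 by omega]
          exact_mod_cast card_perm_numGaps_eq_le hN.symm
      _ = (s + 1).choose (h + 1) *
            ((2 / (n - s)) ^ h * ((n - s : ℝ) ^ h * (n - s - h).factorial)) := by
          rw [← mul_assoc (_ ^ h), ← mul_pow, div_mul_cancel₀ _ hpos.ne']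
      _ ≤ (s + 1).choose (h + 1) * ((2 / (n - s)) ^ h * (2 ^ h * (n - s).factorial)) := by
          gcongr
      _ = (s + 1).choose (h + 1) * ((4 / (n - s)) ^ h * (n - s).factorial) := by
          rw [← mul_assoc (_ ^ h), ← mul_pow, div_mul_eq_mul_div]
          norm_num

end GapSets

section Bounds

variable {s : ℕ}

lemma c_nonneg (n s g : ℕ) : 0 ≤ c n s g := sum_nonneg fun _ _ ↦ ENNReal.toReal_nonneg

lemma c_le_of_lt (h : ℕ) (hs : s < n) :
    c n s (h + 1) ≤ (s + 1).choose (h + 1) * (4 / (n - s)) ^ h * (n / (n + (n - s))) ^ s := by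
  have hM : s + (n - s) = n := Nat.add_sub_cancel' hs.le
  have hP (σ σ' : Equiv.Perm (Fin n)) (hσ : #(sharedSteps n σ σ') = s) :
      pairProb n σ σ' ≤ (2 * (n - s)).choose (n - s) / (n + (n - s)).factorial :=
    pairProb_le σ σ' (by rw [hσ, hM])
  have hratio := factorial_mul_factorial_mul_choose_div_le (Nat.sub_pos_of_lt hs) s
  rw [Nat.sub_add_cancel hs.le, Nat.cast_add, Nat.cast_sub hs.le] at hratio
  have hpos : 0 ≤ (n - s : ℝ) := sub_nonneg.2 (Nat.cast_le.2 hs.le)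
  set Q : ℝ := (2 * (n - s)).choose (n - s) / (n + (n - s)).factorial
  calc c n s (h + 1)
      ≤ n.factorial * #{τ | #(sharedSteps n 1 τ) = s ∧ numGaps n 1 τ = h + 1} * Q :=
        c_le_of_forall hP
    _ ≤ n.factorial * ((s + 1).choose (h + 1) * ((4 / (n - s)) ^ h * (n - s).factorial)) * Q := by
        gcongr
        exact card_perm_numGaps_eq_le_of_lt hs
    _ = (s + 1).choose (h + 1) * (4 / (n - s)) ^ h * (n.factorial * (n - s).factorial * Q) := by
        ring
    _ ≤ (s + 1).choose (h + 1) * (4 / (n - s)) ^ h * (n / (n + (n - s))) ^ s := by gcongr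

lemma c_le_of_le_mul {a : ℝ} (ha : a < 1) (h : ℕ) (hn : 0 < n) (hs : s ≤ a * n) :
    c n s (h + 1) ≤ (s + 1).choose (h + 1) * (4 / (1 - a) / n) ^ h * (2 - a)⁻¹ ^ s := by
  have hn' : (0 : ℝ) < n := Nat.cast_pos.2 hn
  have hsn : (s : ℝ) < n := hs.trans_lt (mul_lt_of_lt_one_left hn' ha)
  have : 0 < 1 - a := sub_pos.2 ha
  have hsub : (1 - a) * n ≤ n - s := by linarith
  have : (0 : ℝ) < n - s := sub_pos.2 hsn
  have hgap : 4 / (n - s : ℝ) ≤ 4 / (1 - a) / n := by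
    rw [div_div]
    gcongr
  have hratio : (n / (n + (n - s)) : ℝ) ≤ (2 - a)⁻¹ := by
    rw [← one_div, div_le_div_iff₀ (by positivity) (by linarith)]
    linarith
  refine (c_le_of_lt h (Nat.cast_lt.1 hsn)).trans ?_
  gcongr

lemma sum_c_le_of_le_mul {a : ℝ} (ha : a < 1) (hn : 0 < n) (hs : s ≤ a * n) {m : ℕ}
    (hm : m ≤ s + 1) :
    ∑ g ∈ Icc 2 m, c n s g ≤
      4 / (1 - a) * Real.exp (4 / (1 - a)) / n * ((s + 1) ^ 2 * (2 - a)⁻¹ ^ s) := by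
  have hn' : (0 : ℝ) < n := Nat.cast_pos.2 hn
  have hsn : s < n := Nat.cast_lt.1 (hs.trans_lt (mul_lt_of_lt_one_left hn' ha))
  have : 0 < 1 - a := sub_pos.2 ha
  have ha'' : 0 ≤ 2 - a := by linarith
  set C := 4 / (1 - a)
  have : 0 ≤ C := by positivity
  have hexp : (1 + C / n) ^ (s + 1) ≤ Real.exp C :=
    calc (1 + C / n) ^ (s + 1) ≤ (1 + C / n) ^ n :=
          pow_le_pow_right₀ (le_add_of_nonneg_right (by positivity)) hsn
      _ ≤ Real.exp (C / n) ^ n := by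
          gcongr
          rw [add_comm]
          exact Real.add_one_le_exp _
      _ = Real.exp C := by rw [← Real.exp_nat_mul, mul_div_cancel₀ _ hn'.ne']
  calc ∑ g ∈ Icc 2 m, c n s g
      ≤ ∑ g ∈ Icc 2 m, ((s + 1).choose g * (C / n) ^ (g - 1)) * (2 - a)⁻¹ ^ s := by
        refine sum_le_sum fun g hg ↦ ?_
        obtain ⟨h, rfl⟩ := Nat.exists_eq_add_of_le' (one_le_two.trans (mem_Icc.1 hg).1)
        exact c_le_of_le_mul ha h hn hs
    _ ≤ C / n * ((s + 1 : ℕ) : ℝ) ^ 2 * (1 + C / n) ^ (s + 1) * (2 - a)⁻¹ ^ s := by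
        rw [← sum_mul]
        gcongr
        exact sum_choose_mul_pow_le (by positivity) hm
    _ ≤ C / n * ((s + 1 : ℕ) : ℝ) ^ 2 * Real.exp C * (2 - a)⁻¹ ^ s := by gcongr
    _ = C * Real.exp C / n * ((s + 1) ^ 2 * (2 - a)⁻¹ ^ s) := by
        push_cast
        ring

end Bounds

section Limits

variable {a : ℝ}

lemma tendsto_sum_sum_c_zero (ha₀ : 0 ≤ a) (ha : a < 1) {m : ℕ → ℕ → ℕ}
    (hm : ∀ n s, m n s ≤ s + 1) :
    Tendsto (fun n : ℕ ↦ ∑ s ∈ Icc 1 ⌊a * n⌋₊, ∑ g ∈ Icc 2 (m n s), c n s g) atTop (nhds 0) := by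
  have hr : (2 - a)⁻¹ < 1 := inv_lt_one_of_one_lt₀ (by linarith)
  have hr₀ : 0 < (2 - a)⁻¹ := inv_pos.2 (by linarith)
  have hsum := summable_succ_pow_mul_geometric 2 hr₀ hr
  set K := 4 / (1 - a) * Real.exp (4 / (1 - a))
  set u : ℕ → ℝ := fun s ↦ ((s : ℝ) + 1) ^ 2 * (2 - a)⁻¹ ^ s
  have : 0 ≤ K := mul_nonneg (div_nonneg zero_le_four (sub_nonneg.2 ha.le)) (Real.exp_nonneg _)
  have hlim : Tendsto (fun n : ℕ ↦ K / n * ∑' s, u s) atTop (nhds 0) := by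
    simpa using (tendsto_const_div_atTop_nhds_zero_nat K).mul_const (∑' s, u s)
  refine squeeze_zero' (Eventually.of_forall fun n ↦ sum_nonneg fun s _ ↦
    sum_nonneg fun g _ ↦ c_nonneg n s g) ?_ hlim
  filter_upwards [eventually_gt_atTop 0] with n hn
  calc ∑ s ∈ Icc 1 ⌊a * n⌋₊, ∑ g ∈ Icc 2 (m n s), c n s g
      ≤ ∑ s ∈ Icc 1 ⌊a * n⌋₊, K / n * u s := by
        refine sum_le_sum fun s hs ↦ sum_c_le_of_le_mul ha hn ?_ (hm n s)
        exact (Nat.le_floor_iff (by positivity)).1 (mem_Icc.1 hs).2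
    _ ≤ K / n * ∑' s, u s := by
        rw [← mul_sum]
        gcongr
        exact hsum.sum_le_tsum _ fun s _ ↦ by positivity

lemma tendsto_sum_c_one_zero (ha₀ : 0 ≤ a) (ha : a < 1) {k : ℕ → ℕ} (hk : Tendsto k atTop atTop) :
    Tendsto (fun n : ℕ ↦ ∑ s ∈ Icc (k n) ⌊a * n⌋₊, c n s 1) atTop (nhds 0) := by
  have hr : (2 - a)⁻¹ < 1 := inv_lt_one_of_one_lt₀ (by linarith)
  have hr₀ : 0 < (2 - a)⁻¹ := inv_pos.2 (by linarith)
  have hsum := summable_succ_pow_mul_geometric 1 hr₀ hr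
  refine squeeze_zero' (Eventually.of_forall fun n ↦ sum_nonneg fun s _ ↦ c_nonneg n s 1) ?_
    (tendsto_sum_Icc_zero_of_summable hsum (fun s ↦ by positivity) hk fun n ↦ ⌊a * n⌋₊)
  filter_upwards [eventually_gt_atTop 0] with n hn
  refine sum_le_sum fun s hs ↦ ?_
  have hs' : s ≤ a * n := (Nat.le_floor_iff (by positivity)).1 (mem_Icc.1 hs).2
  simpa using c_le_of_le_mul ha 0 hn hs'

end Limits

end RandomHypercube

open RandomHypercube in
theorem sum_c_up_to_099n_tendsto_zero_general {a : ℝ} (ha₀ : 0 ≤ a) (ha : a < 1) :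
    (Tendsto (fun n : ℕ =>
        ∑ s ∈ Finset.Icc 1 ⌊a * n⌋₊,
          ∑ g ∈ Finset.Icc 2 (min (s + 1) ((n - s) / 2)), c n s g)
      atTop (nhds 0)) ∧
    (∀ k : ℕ → ℕ, Tendsto k atTop atTop →
      Tendsto (fun n : ℕ => ∑ s ∈ Finset.Icc (k n) ⌊a * n⌋₊, c n s 1)
        atTop (nhds 0)) :=
  ⟨tendsto_sum_sum_c_zero ha₀ ha fun _ _ ↦ min_le_left _ _,
    fun _ ↦ tendsto_sum_c_one_zero ha₀ ha⟩

open RandomHypercube in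
/-- (i) The pair sum over pairs with at least two gaps sharing at most `0.99 n` edges
vanishes; and (ii) for any `k(n) → ∞`, the pair sum over single-gap pairs sharing
between `k(n)` and `0.99 n` edges vanishes. -/
theorem sum_c_up_to_099n_tendsto_zero :
    (Tendsto (fun n : ℕ =>
        ∑ s ∈ Finset.Icc 1 (99 * n / 100),
          ∑ g ∈ Finset.Icc 2 (min (s + 1) ((n - s) / 2)), c n s g)
      atTop (nhds 0)) ∧
    (∀ k : ℕ → ℕ, Tendsto k atTop atTop →
      Tendsto (fun n : ℕ => ∑ s ∈ Finset.Icc (k n) (99 * n / 100), c n s 1)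
        atTop (nhds 0)) := by
  have hfloor (n : ℕ) : ⌊(99 / 100 : ℝ) * n⌋₊ = 99 * n / 100 := by
    rw [div_mul_eq_mul_div]
    exact_mod_cast Nat.floor_div_eq_div (K := ℝ) (99 * n) 100
  simpa only [hfloor] using
    sum_c_up_to_099n_tendsto_zero_general (a := 99 / 100) (by norm_num) (by norm_num)
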